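/- Let (P, M) be an abstract light dual multinet labeled by a quasigroup Q with labeling bijections α₁, α₂, α₃, and let B ∈ M be a block. Define S_i = {x ∈ Q : α_i(x) ∈ B} for i = 1, 2, 3. Then (S₁, S₂, S₃) is a subsquare of Q, i.e., S₁·S₂ ⊆ S₃, S₁\S₃ ⊆ S₂, and S₃/S₂ ⊆ S₁. -/

import Mathlib

/-- A quasigroup: a binary operation with left and right division. -/
structure Quasigroup (Q : Type*) where
  mul : Q → Q → Q
  ldiv : Q → Q → Q
  rdiv : Q → Q → Q
  mul_ldiv : ∀ x z, mul x (ldiv x z) = z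
  ldiv_mul : ∀ x y, ldiv x (mul x y) = y
  rdiv_mul : ∀ z y, mul (rdiv z y) y = z
  mul_rdiv : ∀ x y, rdiv (mul x y) y = x

/-- `(S₁, S₂, S₃)` is a subsquare of the quasigroup `q`. -/
def IsSubsquare {Q : Type*} (q : Quasigroup Q) (S₁ S₂ S₃ : Set Q) : Prop :=
  (∀ x ∈ S₁, ∀ y ∈ S₂, q.mul x y ∈ S₃) ∧
  (∀ x ∈ S₁, ∀ z ∈ S₃, q.ldiv x z ∈ S₂) ∧
  (∀ z ∈ S₃, ∀ y ∈ S₂, q.rdiv z y ∈ S₁)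

/-- An abstract light dual multinet with point set `P`, labeled by the
quasigroup `q` via the labeling maps `α₁, α₂, α₃`. -/
structure LightDualMultinet {Q P : Type*} (q : Quasigroup Q) where
  α₁ : Q → P
  α₂ : Q → P
  α₃ : Q → P
  inj₁ : Function.Injective α₁
  inj₂ : Function.Injective α₂
  inj₃ : Function.Injective α₃
  disj₁₂ : Disjoint (Set.range α₁) (Set.range α₂)
  disj₁₃ : Disjoint (Set.range α₁) (Set.range α₃)
  disj₂₃ : Disjoint (Set.range α₂) (Set.range α₃)
  cover : Set.range α₁ ∪ Set.range α₂ ∪ Set.range α₃ = Set.univ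
  M : Set (Set P)
  at_most_one : ∀ B ∈ M, ∀ C ∈ M, ∀ p p' : P,
    p ≠ p' → p ∈ B → p' ∈ B → p ∈ C → p' ∈ C → B = C
  collinear : ∀ x y : Q, ∃ B ∈ M, α₁ x ∈ B ∧ α₂ y ∈ B ∧ α₃ (q.mul x y) ∈ B
  nondegenerate : ∃ B ∈ M, ∃ C ∈ M, B ≠ C

/-!
A subsquare is a triple of sets for which membership of any two of `x`, `y`, `x * y` in their
respective sets forces that of the third. If two of the points labeled `x`, `y`, `x * y` lie in a
block `B`, then `B` shares these two distinct points with the block `C` through all three; hence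
`C = B`, and the third point lies in `B` too.
-/

/-- The family of blocks `M` is the line set of a partial linear space: two distinct points lie in
at most one common block. Blocks with fewer than two points are allowed. -/
def IsPartialLinearSpace {P : Type*} (M : Set (Set P)) : Prop :=
  ∀ B ∈ M, ∀ C ∈ M, ∀ p p' : P, p ≠ p' → p ∈ B → p' ∈ B → p ∈ C → p' ∈ C → B = C

theorem IsPartialLinearSpace.subset_of_mem_of_mem {P : Type*} {M : Set (Set P)}
    (hM : IsPartialLinearSpace M) {B C : Set P} (hB : B ∈ M) (hC : C ∈ M) {p p' : P}
    (hne : p ≠ p') (hpC : p ∈ C) (hp'C : p' ∈ C) (hpB : p ∈ B) (hp'B : p' ∈ B) : C ⊆ B :=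
  (hM C hC B hB p p' hne hpC hp'C hpB hp'B).subset

theorem isSubsquare_iff_forall_mul {Q : Type*} {q : Quasigroup Q} {S₁ S₂ S₃ : Set Q} :
    IsSubsquare q S₁ S₂ S₃ ↔ ∀ x y,
      (x ∈ S₁ → y ∈ S₂ → q.mul x y ∈ S₃) ∧
      (x ∈ S₁ → q.mul x y ∈ S₃ → y ∈ S₂) ∧
      (q.mul x y ∈ S₃ → y ∈ S₂ → x ∈ S₁) := by
  constructor
  · rintro ⟨hmul, hldiv, hrdiv⟩ x y
    refine ⟨fun hx hy ↦ hmul x hx y hy, fun hx hxy ↦ ?_, fun hxy hy ↦ ?_⟩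
    · simpa only [q.ldiv_mul] using hldiv x hx _ hxy
    · simpa only [q.mul_rdiv] using hrdiv _ hxy y hy
  · intro h
    refine ⟨fun x hx y hy ↦ (h x y).1 hx hy, fun x hx z hz ↦ ?_, fun z hz y hy ↦ ?_⟩
    · exact (h x (q.ldiv x z)).2.1 hx (by rwa [q.mul_ldiv])
    · exact (h (q.rdiv z y) y).2.2 (by rwa [q.rdiv_mul]) hy

theorem block_gives_subsquare_general {Q P : Type*} (q : Quasigroup Q) {α₁ α₂ α₃ : Q → P}
    (disj₁₂ : Disjoint (Set.range α₁) (Set.range α₂))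
    (disj₁₃ : Disjoint (Set.range α₁) (Set.range α₃))
    (disj₂₃ : Disjoint (Set.range α₂) (Set.range α₃))
    {M : Set (Set P)} (hM : IsPartialLinearSpace M)
    (collinear : ∀ x y, ∃ C ∈ M, α₁ x ∈ C ∧ α₂ y ∈ C ∧ α₃ (q.mul x y) ∈ C)
    {B : Set P} (hB : B ∈ M) :
    IsSubsquare q (α₁ ⁻¹' B) (α₂ ⁻¹' B) (α₃ ⁻¹' B) := by
  rw [Set.disjoint_range_iff] at disj₁₂ disj₁₃ disj₂₃
  rw [isSubsquare_iff_forall_mul]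
  intro x y
  obtain ⟨C, hC, hxC, hyC, hxyC⟩ := collinear x y
  refine ⟨fun hxB hyB ↦ ?_, fun hxB hxyB ↦ ?_, fun hxyB hyB ↦ ?_⟩
  · exact hM.subset_of_mem_of_mem hB hC (disj₁₂ x y) hxC hyC hxB hyB hxyC
  · exact hM.subset_of_mem_of_mem hB hC (disj₁₃ x _) hxC hxyC hxB hxyB hyC
  · exact hM.subset_of_mem_of_mem hB hC (disj₂₃ y _) hyC hxyC hyB hxyB hxC

/-- For any block `B` of a light dual multinet, the triple of index sets
`S_i = {x : α_i x ∈ B}` is a subsquare of the labeling quasigroup. -/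
theorem block_gives_subsquare {Q P : Type*} (q : Quasigroup Q)
    (N : @LightDualMultinet Q P q) (B : Set P) (hB : B ∈ N.M) :
    IsSubsquare q {x | N.α₁ x ∈ B} {y | N.α₂ y ∈ B} {z | N.α₃ z ∈ B} :=
  block_gives_subsquare_general q N.disj₁₂ N.disj₁₃ N.disj₂₃ N.at_most_one N.collinear hB
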